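/- Let f ∈ Hol(α) be a bounded α-Hölder potential and ν its conformal measure with eigenvalue λ > 0. Then for every x ∈ X the limit h(x) = lim_{n→∞} L_f^n 1(x) / ∫_X L_f^n 1 dν exists; the function h is bounded away from 0 and from ∞ (there exist 0 < c ≤ C < ∞ with c ≤ h(x) ≤ C for all x), h belongs to Hol(α), and L_f h = λh. Moreover, h is the unique α-Hölder function with this property up to multiplication by a scalar: any h' ∈ Hol(α) with L_f h' = λh' is a scalar multiple of h. -/

import Mathlib

open MeasureTheory Filter Topology BoundedContinuousFunction

noncomputable section

variable {E : Type*} [MetricSpace E]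

/-- The metric on the sequence space `X = E^ℕ`:
`d_X(x,y) = ∑_{n=1}^∞ 2⁻ⁿ · min(d_E(x_n,y_n), 1)`. -/
def dX (x y : ℕ → E) : ℝ :=
  ∑' n : ℕ, ((1 : ℝ) / 2) ^ (n + 1) * min (dist (x n) (y n)) 1

/-- The left shift `σ(x₁,x₂,x₃,…) = (x₂,x₃,…)`. -/
def shift (x : ℕ → E) : ℕ → E := fun n => x (n + 1)

theorem continuous_shift : Continuous (shift (E := E)) :=
  continuous_pi fun n => continuous_apply (n + 1)

/-- Prepending one symbol: `ax = (a, x₁, x₂, …)`. -/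
def cons (a : E) (x : ℕ → E) : ℕ → E := fun n => Nat.casesOn n a x

/-- Prepending a finite word `a = (a₁,…,a_n)`. -/
def prepend {n : ℕ} (a : Fin n → E) (x : ℕ → E) : ℕ → E :=
  fun k => if h : k < n then a ⟨k, h⟩ else x (k - n)

/-- Birkhoff sums `f_n = ∑_{k=0}^{n-1} f ∘ σᵏ`. -/
def birkhoff (f : (ℕ → E) → ℝ) (n : ℕ) (x : ℕ → E) : ℝ :=
  ∑ k ∈ Finset.range n, f (shift^[k] x)

/-- Boundedness of a real-valued function on `X`. -/
def Bdd (g : (ℕ → E) → ℝ) : Prop := ∃ M : ℝ, ∀ x, |g x| ≤ M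

/-- `g` is `α`-Hölder with constant `C` (w.r.t. the metric `dX`). -/
def HolderConst (α C : ℝ) (g : (ℕ → E) → ℝ) : Prop :=
  ∀ x y, |g x - g y| ≤ C * dX x y ^ α

/-- `g ∈ Hol(α)`: bounded, continuous and `α`-Hölder. -/
def MemHol (α : ℝ) (g : (ℕ → E) → ℝ) : Prop :=
  Continuous g ∧ Bdd g ∧ ∃ C : ℝ, HolderConst α C g

/-- `g ∈ C_b(X,ℝ)`: bounded and continuous. -/
def MemCb (g : (ℕ → E) → ℝ) : Prop := Continuous g ∧ Bdd g

/-- The Hölder seminorm `D_α(g) = sup_{x ≠ y} |g x - g y| / d_X(x,y)^α`. -/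
def Dalpha (α : ℝ) (g : (ℕ → E) → ℝ) : ℝ :=
  sSup {r : ℝ | ∃ x y : ℕ → E, x ≠ y ∧ r = |g x - g y| / dX x y ^ α}

/-- The supremum norm `‖g‖_∞`. -/
def supNorm (g : (ℕ → E) → ℝ) : ℝ := ⨆ x : ℕ → E, |g x|

/-- The Hölder norm `‖g‖_α = ‖g‖_∞ + D_α(g)`. -/
def alphaNorm (α : ℝ) (g : (ℕ → E) → ℝ) : ℝ := supNorm g + Dalpha α g

variable [MeasurableSpace E] [BorelSpace E]

/-- The Ruelle transfer operator `L_f φ(x) = ∫_E e^{f(ax)} φ(ax) dp(a)`. -/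
def ruelle (p : Measure E) (f φ : (ℕ → E) → ℝ) : (ℕ → E) → ℝ :=
  fun x => ∫ a, Real.exp (f (cons a x)) * φ (cons a x) ∂p

/-- The normalized operators `P^m_n(φ) = L_f^m(φ · L_f^n 1) / L_f^{m+n} 1`. -/
def Pmn (p : Measure E) (f : (ℕ → E) → ℝ) (m n : ℕ) (φ : (ℕ → E) → ℝ) : (ℕ → E) → ℝ :=
  fun x => (ruelle p f)^[m] (fun y => φ y * (ruelle p f)^[n] (fun _ => 1) y) x /
    (ruelle p f)^[m + n] (fun _ => 1) x

/-- The equivalent bounded metric `d̄(x,y) = min{1, 4 C_f d_X(x,y)^α}`. -/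
def dbar (Cf α : ℝ) (x y : ℕ → E) : ℝ := min 1 (4 * Cf * dX x y ^ α)

/-- The Wasserstein distance associated to `d̄`, via Kantorovich duality. -/
def wass (Cf α : ℝ) (μ₁ μ₂ : Measure (ℕ → E)) : ℝ :=
  sSup {r : ℝ | ∃ g : (ℕ → E) → ℝ,
    (∀ x y, |g x - g y| ≤ dbar Cf α x y) ∧ r = (∫ x, g x ∂μ₁) - ∫ x, g x ∂μ₂}

/-!
Divide `L_f` by `λ`, so that the resulting operator `T` preserves `∫ · dν`, and consider the cone of
nonnegative `φ` with `φ x ≤ exp (B d(x,y)^α) φ y`. Prepending a symbol halves distances, so for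
large `B` the operator `T` maps this cone into the cone of exponent `B - 1`. A function in the
smaller cone is bounded below by a fixed multiple of its integral, and a small constant
`η ∫ φ dν` can be subtracted from it without leaving the larger cone. Two functions of the cone
with the same integral therefore share, after each application of `T`, a constant carrying the
proportion `η` of their mass. Subtracting it repeatedly shows that their images under `T^n` are
within `O((1 - η)^n)` of each other. Hence `T^n 1` converges uniformly to some `h`, and since every
Hölder function lies in the cone after adding a constant, `T^n g → (∫ g dν) h` for all Hölder `g`.
-/

section SequenceMetric

omit [MeasurableSpace E] [BorelSpace E]

theorem summable_dX (x y : ℕ → E) :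
    Summable fun n : ℕ => ((1 : ℝ) / 2) ^ (n + 1) * min (dist (x n) (y n)) 1 :=
  .of_nonneg_of_le (fun _ => by positivity)
    (fun _ => mul_le_of_le_one_right (by positivity) (min_le_right _ _))
    ((summable_nat_add_iff 1).2 summable_geometric_two)

theorem dX_nonneg (x y : ℕ → E) : 0 ≤ dX x y :=
  tsum_nonneg fun _ => by positivity

theorem dX_le_one (x y : ℕ → E) : dX x y ≤ 1 := by
  have hgeom : HasSum (fun n : ℕ => ((1 : ℝ) / 2) ^ (n + 1)) 1 := by
    convert! hasSum_geometric_two' (1 : ℝ) using 2 with n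
    rw [pow_succ, one_div_pow]
    ring
  exact hasSum_le (fun _ => mul_le_of_le_one_right (by positivity) (min_le_right _ _))
    (summable_dX x y).hasSum hgeom

theorem dX_comm (x y : ℕ → E) : dX x y = dX y x := by
  simp only [dX, dist_comm]

theorem dX_cons (a : E) (x y : ℕ → E) : dX (cons a x) (cons a y) = 1 / 2 * dX x y := by
  have hhead : min (dist (cons a x 0) (cons a y 0)) 1 = 0 :=
    (congrArg (min · 1) (dist_self a)).trans (min_eq_left zero_le_one)
  rw [dX, (summable_dX (cons a x) (cons a y)).tsum_eq_zero_add, hhead, mul_zero, zero_add, dX,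
    ← tsum_mul_left]
  refine tsum_congr fun n => ?_
  simp only [cons]
  ring

theorem dX_cons_rpow (α : ℝ) (a : E) (x y : ℕ → E) :
    dX (cons a x) (cons a y) ^ α = (1 / 2 : ℝ) ^ α * dX x y ^ α := by
  rw [dX_cons, Real.mul_rpow (by norm_num) (dX_nonneg x y)]

theorem dX_rpow_nonneg (α : ℝ) (x y : ℕ → E) : 0 ≤ dX x y ^ α :=
  Real.rpow_nonneg (dX_nonneg x y) α

theorem dX_rpow_le_one {α : ℝ} (hα : 0 ≤ α) (x y : ℕ → E) : dX x y ^ α ≤ 1 :=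
  Real.rpow_le_one (dX_nonneg x y) (dX_le_one x y) hα

theorem MemCb.exists_boundedContinuousFunction {g : (ℕ → E) → ℝ} (hg : MemCb g) :
    ∃ φ : (ℕ → E) →ᵇ ℝ, ⇑φ = g := by
  obtain ⟨hcont, M, hM⟩ := hg
  exact ⟨.ofNormedAddCommGroup g hcont M hM, rfl⟩

theorem memCb_coe (φ : (ℕ → E) →ᵇ ℝ) : MemCb φ :=
  ⟨φ.continuous, ‖φ‖, φ.norm_coe_le_norm⟩

end SequenceMetric

section TransferOperator

variable {S : Type*} [TopologicalSpace S]

theorem continuous_cons : Continuous fun q : S × (ℕ → S) => cons q.1 q.2 := by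
  refine continuous_pi fun n => ?_
  cases n with
  | zero => exact continuous_fst
  | succ n => exact (continuous_apply n).comp continuous_snd

theorem norm_exp_mul_le (f φ : (ℕ → S) →ᵇ ℝ) (x : ℕ → S) :
    ‖Real.exp (f x) * φ x‖ ≤ Real.exp ‖f‖ * ‖φ‖ := by
  rw [norm_mul, Real.norm_eq_abs, Real.abs_exp]
  gcongr
  · exact (le_abs_self _).trans (f.norm_coe_le_norm x)
  · exact φ.norm_coe_le_norm x

variable [MeasurableSpace S] [OpensMeasurableSpace S] (p : Measure S) [IsFiniteMeasure p]

theorem integrable_exp_mul_cons (f φ : (ℕ → S) →ᵇ ℝ) (x : ℕ → S) :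
    Integrable (fun a => Real.exp (f (cons a x)) * φ (cons a x)) p := by
  have hcons : Continuous fun a : S => cons a x := continuous_cons.comp (.prodMk_left x)
  exact .of_bound (by fun_prop) _ (ae_of_all _ fun a => norm_exp_mul_le f φ (cons a x))

omit [OpensMeasurableSpace S] in
theorem norm_ruelle_le (f φ : (ℕ → S) →ᵇ ℝ) (x : ℕ → S) :
    ‖ruelle p f φ x‖ ≤ Real.exp ‖f‖ * p.real Set.univ * ‖φ‖ :=
  (norm_integral_le_of_norm_le_const
    (ae_of_all _ fun a => norm_exp_mul_le f φ (cons a x))).trans_eq (by ring)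

variable [FirstCountableTopology S]

theorem continuous_ruelle (f φ : (ℕ → S) →ᵇ ℝ) : Continuous (ruelle p f φ) := by
  refine continuous_of_dominated (fun x => (integrable_exp_mul_cons p f φ x).aestronglyMeasurable)
    (fun x => ae_of_all _ fun a => norm_exp_mul_le f φ (cons a x)) (integrable_const _)
    (ae_of_all _ fun a => ?_)
  have hcons : Continuous fun x : ℕ → S => cons a x := continuous_cons.comp (.prodMk_right a)
  fun_prop

/-- The Ruelle operator `L_f` as a bounded linear operator on `C_b(X,ℝ)`. -/
def ruelleCLM (f : (ℕ → S) →ᵇ ℝ) : ((ℕ → S) →ᵇ ℝ) →L[ℝ] ((ℕ → S) →ᵇ ℝ) :=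
  LinearMap.mkContinuous
    { toFun := fun φ => .ofNormedAddCommGroup (ruelle p f φ) (continuous_ruelle p f φ) _
        (norm_ruelle_le p f φ)
      map_add' := fun φ ψ => by
        ext x
        exact (integral_congr_ae (ae_of_all _ fun _ => mul_add _ _ _)).trans
          (integral_add (integrable_exp_mul_cons p f φ x) (integrable_exp_mul_cons p f ψ x))
      map_smul' := fun c φ => by
        ext x
        exact (integral_congr_ae (ae_of_all _ fun _ => mul_left_comm _ _ _)).trans
          (integral_const_mul c _) }
    (Real.exp ‖f‖ * p.real Set.univ)
    fun φ => norm_ofNormedAddCommGroup_le _ (by positivity) (norm_ruelle_le p f φ)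

theorem coe_ruelleCLM (f φ : (ℕ → S) →ᵇ ℝ) : ⇑(ruelleCLM p f φ) = ruelle p f φ :=
  rfl

theorem iterate_ruelle_eq_smul (f φ : (ℕ → S) →ᵇ ℝ) {lam : ℝ} (hlam : lam ≠ 0) (n : ℕ) :
    (ruelle p f)^[n] φ = lam ^ n • ⇑((lam⁻¹ • ruelleCLM p f)^[n] φ) := by
  induction n with
  | zero => simp only [Function.iterate_zero_apply, pow_zero, one_smul]
  | succ n ih =>
    rw [Function.iterate_succ_apply', Function.iterate_succ_apply', ih]
    set ψ := (lam⁻¹ • ruelleCLM p f)^[n] φ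
    calc ruelle p f (lam ^ n • ⇑ψ) = ⇑(ruelleCLM p f (lam ^ n • ψ)) := rfl
      _ = lam ^ n • ⇑(ruelleCLM p f ψ) := by rw [map_smul]; rfl
      _ = lam ^ n • lam • lam⁻¹ • ⇑(ruelleCLM p f ψ) := by rw [smul_inv_smul₀ hlam]
      _ = lam ^ (n + 1) • ⇑((lam⁻¹ • ruelleCLM p f) ψ) := by rw [smul_smul, ← pow_succ]; rfl

end TransferOperator

theorem exp_sub_one_le_mul_exp (s : ℝ) : Real.exp s - 1 ≤ s * Real.exp s := by
  have h := mul_le_mul_of_nonneg_right (Real.one_sub_le_exp_neg s) (Real.exp_pos s).le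
  rw [← Real.exp_add, neg_add_cancel, Real.exp_zero] at h
  linarith

/-- The cone of nonnegative functions on `X` whose logarithm is `α`-Hölder with constant `B`. The
bound is written multiplicatively so that functions with zeros are covered. -/
structure LogHolder (α B : ℝ) (φ : (ℕ → E) → ℝ) : Prop where
  nonneg : ∀ x, 0 ≤ φ x
  le_exp_mul : ∀ x y, φ x ≤ Real.exp (B * dX x y ^ α) * φ y

namespace LogHolder

section Cone

omit [MeasurableSpace E] [BorelSpace E]

variable {α B : ℝ} {φ : (ℕ → E) → ℝ}

theorem mono {B' : ℝ} (hφ : LogHolder α B φ) (hBB' : B ≤ B') : LogHolder α B' φ where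
  nonneg := hφ.nonneg
  le_exp_mul x y := (hφ.le_exp_mul x y).trans <| by
    gcongr
    exacts [hφ.nonneg y, dX_rpow_nonneg α x y]

theorem const (hB : 0 ≤ B) {c : ℝ} (hc : 0 ≤ c) : LogHolder α B fun _ : ℕ → E => c where
  nonneg _ := hc
  le_exp_mul x y :=
    le_mul_of_one_le_left hc (Real.one_le_exp (mul_nonneg hB (dX_rpow_nonneg α x y)))

theorem const_mul (hφ : LogHolder α B φ) {c : ℝ} (hc : 0 ≤ c) :
    LogHolder α B fun x => c * φ x where
  nonneg x := mul_nonneg hc (hφ.nonneg x)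
  le_exp_mul x y := (mul_le_mul_of_nonneg_left (hφ.le_exp_mul x y) hc).trans_eq (by ring)

theorem of_tendsto {u : ℕ → (ℕ → E) → ℝ} (hu : ∀ n, LogHolder α B (u n))
    (hlim : ∀ x, Tendsto (fun n => u n x) atTop (𝓝 (φ x))) : LogHolder α B φ where
  nonneg x := ge_of_tendsto' (hlim x) fun n => (hu n).nonneg x
  le_exp_mul x y :=
    le_of_tendsto_of_tendsto' (hlim x) ((hlim y).const_mul _) fun n => (hu n).le_exp_mul x y

theorem le_exp_mul_apply (hα : 0 ≤ α) (hB : 0 ≤ B) (hφ : LogHolder α B φ) (x y : ℕ → E) :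
    φ x ≤ Real.exp B * φ y := by
  refine (hφ.le_exp_mul x y).trans ?_
  gcongr
  exacts [hφ.nonneg y, mul_le_of_le_one_right hB (dX_rpow_le_one hα x y)]

theorem sub_const (hα : 0 ≤ α) (hB : 1 ≤ B) (hφ : LogHolder α (B - 1) φ) {c : ℝ} (hc : 0 ≤ c)
    (hcφ : ∀ y, c * (B * Real.exp B) ≤ φ y) : LogHolder α B fun x => φ x - c where
  nonneg x := by
    have hexp : 1 ≤ B * Real.exp B :=
      one_le_mul_of_one_le_of_one_le hB (Real.one_le_exp (by linarith))
    exact sub_nonneg.2 ((le_mul_of_one_le_right hc hexp).trans (hcφ x))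
  le_exp_mul x y := by
    have hφxy := hφ.le_exp_mul x y
    have ht₀ := dX_rpow_nonneg α x y
    have ht₁ := dX_rpow_le_one hα x y
    set t := dX x y ^ α
    have hexp : Real.exp (B * t) - 1 ≤ B * t * Real.exp B := by
      refine (exp_sub_one_le_mul_exp _).trans ?_
      gcongr
      exact mul_le_of_le_one_right (by linarith) ht₁
    have hgap : t ≤ Real.exp (B * t) - Real.exp ((B - 1) * t) := by
      have hone : 1 ≤ Real.exp ((B - 1) * t) :=
        Real.one_le_exp (mul_nonneg (by linarith) ht₀)
      have hfactor : Real.exp (B * t) = Real.exp ((B - 1) * t) * Real.exp t := by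
        rw [← Real.exp_add]
        ring_nf
      nlinarith [Real.add_one_le_exp t]
    have hkey : c * (Real.exp (B * t) - 1) ≤
        (Real.exp (B * t) - Real.exp ((B - 1) * t)) * φ y := calc
      c * (Real.exp (B * t) - 1) ≤ c * (B * t * Real.exp B) := by gcongr
      _ = t * (c * (B * Real.exp B)) := by ring
      _ ≤ t * φ y := by gcongr; exact hcφ y
      _ ≤ _ := mul_le_mul_of_nonneg_right hgap (hφ.nonneg y)
    linarith

theorem holderConst (hα : 0 ≤ α) (hB : 0 ≤ B) (hφ : LogHolder α B φ) {M : ℝ}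
    (hM : ∀ x, φ x ≤ M) : HolderConst α (B * Real.exp B * M) φ := by
  have hsub : ∀ x y, φ x - φ y ≤ B * Real.exp B * M * dX x y ^ α := fun x y => by
    have ht₀ := dX_rpow_nonneg α x y
    have hexp : Real.exp (B * dX x y ^ α) ≤ Real.exp B :=
      Real.exp_le_exp.2 (mul_le_of_le_one_right hB (dX_rpow_le_one hα x y))
    calc φ x - φ y ≤ (Real.exp (B * dX x y ^ α) - 1) * φ y := by linarith [hφ.le_exp_mul x y]
      _ ≤ B * dX x y ^ α * Real.exp (B * dX x y ^ α) * φ y :=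
        mul_le_mul_of_nonneg_right (exp_sub_one_le_mul_exp _) (hφ.nonneg y)
      _ ≤ B * dX x y ^ α * Real.exp B * M :=
        mul_le_mul (by gcongr) (hM y) (hφ.nonneg y) (by positivity)
      _ = B * Real.exp B * M * dX x y ^ α := by ring
  exact fun x y => abs_sub_le_iff.2 ⟨hsub x y, dX_comm x y ▸ hsub y x⟩

end Cone

omit [BorelSpace E] in
theorem ruelle [OpensMeasurableSpace E] {α B C : ℝ} {f φ : (ℕ → E) →ᵇ ℝ} (hf : HolderConst α C f)
    (hφ : LogHolder α B φ) (p : Measure E) [IsFiniteMeasure p] :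
    LogHolder α ((1 / 2) ^ α * (B + C)) (ruelle p f φ) where
  nonneg x := integral_nonneg fun a => mul_nonneg (Real.exp_pos _).le (hφ.nonneg _)
  le_exp_mul x y := by
    simp only [_root_.ruelle]
    rw [← integral_const_mul]
    refine integral_mono (integrable_exp_mul_cons p f φ x)
      ((integrable_exp_mul_cons p f φ y).const_mul _) fun a => ?_
    have hfa : f (cons a x) ≤ f (cons a y) + C * dX (cons a x) (cons a y) ^ α := by
      linarith [(le_abs_self _).trans (hf (cons a x) (cons a y))]
    calc Real.exp (f (cons a x)) * φ (cons a x)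
        ≤ Real.exp (f (cons a y) + C * dX (cons a x) (cons a y) ^ α) *
            (Real.exp (B * dX (cons a x) (cons a y) ^ α) * φ (cons a y)) :=
          mul_le_mul (Real.exp_le_exp.2 hfa) (hφ.le_exp_mul _ _) (hφ.nonneg _) (Real.exp_pos _).le
      _ = Real.exp ((1 / 2) ^ α * (B + C) * dX x y ^ α) *
            (Real.exp (f (cons a y)) * φ (cons a y)) := by
          rw [dX_cons_rpow, Real.exp_add, mul_add, add_mul, Real.exp_add]
          ring_nf

section Integral

omit [BorelSpace E]

variable [OpensMeasurableSpace E] [SecondCountableTopology E] {α B : ℝ} {φ : (ℕ → E) →ᵇ ℝ}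
  (ν : Measure (ℕ → E)) [IsProbabilityMeasure ν]

theorem exp_neg_mul_integral_le (hα : 0 ≤ α) (hB : 0 ≤ B) (hφ : LogHolder α B φ) (y : ℕ → E) :
    Real.exp (-B) * ∫ x, φ x ∂ν ≤ φ y := by
  rw [Real.exp_neg, inv_mul_le_iff₀ (Real.exp_pos B)]
  simpa using integral_mono (φ.integrable ν) (integrable_const (Real.exp B * φ y))
    fun x => hφ.le_exp_mul_apply hα hB x y

theorem le_exp_mul_integral (hα : 0 ≤ α) (hB : 0 ≤ B) (hφ : LogHolder α B φ) (y : ℕ → E) :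
    φ y ≤ Real.exp B * ∫ x, φ x ∂ν := by
  simpa [integral_const_mul] using integral_mono (integrable_const (φ y))
    ((φ.integrable ν).const_mul (Real.exp B)) fun x => hφ.le_exp_mul_apply hα hB y x

end Integral

end LogHolder

omit [MeasurableSpace E] [BorelSpace E] in
theorem HolderConst.exists_logHolder_add_const {α B D : ℝ} (hB : 0 < B) {g : (ℕ → E) → ℝ}
    (hg : HolderConst α D g) (hbdd : Bdd g) : ∃ K : ℝ, LogHolder α B fun x => g x + K := by
  obtain ⟨M, hM⟩ := hbdd
  have hlower : ∀ x, |D| / B ≤ g x + (M + |D| / B) := fun x => by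
    linarith [neg_le_of_abs_le (hM x)]
  have hnonneg : ∀ x, 0 ≤ g x + (M + |D| / B) := fun x => le_trans (by positivity) (hlower x)
  refine ⟨M + |D| / B, hnonneg, fun x y => ?_⟩
  have hsub : g x - g y ≤ |D| * dX x y ^ α := (le_abs_self _).trans <|
    (hg x y).trans (mul_le_mul_of_nonneg_right (le_abs_self D) (dX_rpow_nonneg α x y))
  calc g x + (M + |D| / B) ≤ g y + (M + |D| / B) + B * dX x y ^ α * (|D| / B) := by
        have hslope : B * dX x y ^ α * (|D| / B) = |D| * dX x y ^ α := by field_simp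
        linarith
    _ ≤ g y + (M + |D| / B) + B * dX x y ^ α * (g y + (M + |D| / B)) := by
        have := dX_rpow_nonneg α x y
        gcongr
        exact hlower y
    _ = (B * dX x y ^ α + 1) * (g y + (M + |D| / B)) := by ring
    _ ≤ _ := mul_le_mul_of_nonneg_right (Real.add_one_le_exp _) (hnonneg y)

/-- The proportion `η` of its mean that can be subtracted as a constant from a function of the cone
of exponent `B - 1` so that the difference stays in the cone of exponent `B`. -/
def coneGap (B : ℝ) : ℝ := Real.exp (-B) / (B * Real.exp B)

theorem coneGap_pos {B : ℝ} (hB : 0 < B) : 0 < coneGap B := by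
  unfold coneGap
  positivity

theorem coneGap_le_one {B : ℝ} (hB : 1 ≤ B) : coneGap B ≤ 1 := by
  have hexp : 1 ≤ Real.exp B := Real.one_le_exp (by linarith)
  exact div_le_one_of_le₀ ((Real.exp_le_one_iff.2 (by linarith)).trans
    (one_le_mul_of_one_le_of_one_le hB hexp)) (by positivity)

theorem coneGap_mul {B : ℝ} (hB : B ≠ 0) : coneGap B * (B * Real.exp B) = Real.exp (-B) :=
  div_mul_cancel₀ _ (mul_ne_zero hB (Real.exp_ne_zero B))

theorem tendsto_iterate_const {X : Type*} [TopologicalSpace X]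
    {T : (X →ᵇ ℝ) →L[ℝ] (X →ᵇ ℝ)} {h : X →ᵇ ℝ}
    (hh : Tendsto (fun n => T^[n] 1) atTop (𝓝 h)) (c : ℝ) :
    Tendsto (fun n => T^[n] (const X c)) atTop (𝓝 (c • h)) := by
  refine (hh.const_smul c).congr fun n => ?_
  have hconst : const X c = c • 1 := by ext; simp
  rw [hconst, ← FunLike.coe_pow_eq_iterate, map_smul]

section ConeContraction

omit [BorelSpace E]

/-- A bounded operator on `C_b(X,ℝ)` that preserves the integral against `ν` and improves the
exponent of the log-Hölder cone from `B` to `B - 1`. -/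
structure IsConeContraction (T : ((ℕ → E) →ᵇ ℝ) →L[ℝ] ((ℕ → E) →ᵇ ℝ)) (ν : Measure (ℕ → E))
    (α B : ℝ) : Prop where
  exponent_nonneg : 0 ≤ α
  one_le : 1 ≤ B
  integral_map : ∀ φ, ∫ x, T φ x ∂ν = ∫ x, φ x ∂ν
  logHolder_map : ∀ φ : (ℕ → E) →ᵇ ℝ, LogHolder α B φ → LogHolder α (B - 1) (T φ)

namespace IsConeContraction

variable {T : ((ℕ → E) →ᵇ ℝ) →L[ℝ] ((ℕ → E) →ᵇ ℝ)} {ν : Measure (ℕ → E)} {α B : ℝ}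

theorem nonneg (hT : IsConeContraction T ν α B) : 0 ≤ B :=
  zero_le_one.trans hT.one_le

theorem coneGap_pos (hT : IsConeContraction T ν α B) : 0 < coneGap B :=
  _root_.coneGap_pos (zero_lt_one.trans_le hT.one_le)

theorem logHolder_const (hT : IsConeContraction T ν α B) {c : ℝ} (hc : 0 ≤ c) :
    LogHolder α B (const (ℕ → E) c) :=
  .const hT.nonneg hc

theorem logHolder_iterate (hT : IsConeContraction T ν α B) {φ : (ℕ → E) →ᵇ ℝ}
    (hφ : LogHolder α B φ) (n : ℕ) : LogHolder α B (T^[n] φ) := by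
  induction n with
  | zero => exact hφ
  | succ n ih =>
    rw [Function.iterate_succ_apply']
    exact (hT.logHolder_map _ ih).mono (by linarith)

theorem integral_iterate (hT : IsConeContraction T ν α B) (φ : (ℕ → E) →ᵇ ℝ) (n : ℕ) :
    ∫ x, T^[n] φ x ∂ν = ∫ x, φ x ∂ν := by
  induction n with
  | zero => rfl
  | succ n ih => rw [Function.iterate_succ_apply', hT.integral_map, ih]

variable [OpensMeasurableSpace E] [SecondCountableTopology E] [IsProbabilityMeasure ν]

theorem logHolder_map_sub_const (hT : IsConeContraction T ν α B) {φ : (ℕ → E) →ᵇ ℝ}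
    (hφ : LogHolder α B φ) :
    LogHolder α B (T φ - const (ℕ → E) (coneGap B * ∫ x, φ x ∂ν)) := by
  have hTφ := hT.logHolder_map φ hφ
  refine hTφ.sub_const hT.exponent_nonneg hT.one_le
    (mul_nonneg hT.coneGap_pos.le (integral_nonneg hφ.nonneg)) fun y => ?_
  have hlower := (hTφ.mono (sub_le_self B zero_le_one)).exp_neg_mul_integral_le ν
    hT.exponent_nonneg hT.nonneg y
  rwa [hT.integral_map, ← coneGap_mul (zero_lt_one.trans_le hT.one_le).ne', mul_right_comm]
    at hlower

theorem integral_map_sub_const (hT : IsConeContraction T ν α B) (φ : (ℕ → E) →ᵇ ℝ) :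
    ∫ x, (T φ - const (ℕ → E) (coneGap B * ∫ x, φ x ∂ν)) x ∂ν =
      (1 - coneGap B) * ∫ x, φ x ∂ν := by
  simp only [BoundedContinuousFunction.sub_apply, const_apply]
  rw [integral_sub ((T φ).integrable ν) (integrable_const _), hT.integral_map, integral_const,
    probReal_univ, one_smul]
  ring

theorem norm_iterate_sub_le (hT : IsConeContraction T ν α B) (n : ℕ) {φ ψ : (ℕ → E) →ᵇ ℝ}
    (hφ : LogHolder α B φ) (hψ : LogHolder α B ψ) (hφψ : ∫ x, φ x ∂ν = ∫ x, ψ x ∂ν) :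
    ‖T^[n] φ - T^[n] ψ‖ ≤ (1 - coneGap B) ^ n * (Real.exp B * ∫ x, φ x ∂ν) := by
  induction n generalizing φ ψ with
  | zero =>
    have hφ_le := hφ.le_exp_mul_integral ν hT.exponent_nonneg hT.nonneg
    have hψ_le := hψ.le_exp_mul_integral ν hT.exponent_nonneg hT.nonneg
    rw [← hφψ] at hψ_le
    rw [pow_zero, one_mul]
    refine (norm_le (mul_nonneg (Real.exp_pos B).le (integral_nonneg hφ.nonneg))).2 fun x => ?_
    exact abs_sub_le_of_nonneg_of_le (hφ.nonneg x) (hφ_le x) (hψ.nonneg x) (hψ_le x)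
  | succ n ih =>
    have hstep := ih (hT.logHolder_map_sub_const hφ) (hT.logHolder_map_sub_const hψ)
      (by rw [hT.integral_map_sub_const, hT.integral_map_sub_const, hφψ])
    rw [hT.integral_map_sub_const, iterate_map_sub, iterate_map_sub, hφψ,
      sub_sub_sub_cancel_right, ← Function.iterate_succ_apply, ← Function.iterate_succ_apply]
      at hstep
    rw [hφψ]
    exact hstep.trans_eq (by ring)

theorem exists_tendsto_iterate_one (hT : IsConeContraction T ν α B) :
    ∃ h, Tendsto (fun n => T^[n] 1) atTop (𝓝 h) := by
  have hone : LogHolder α B (1 : (ℕ → E) →ᵇ ℝ) := hT.logHolder_const zero_le_one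
  refine cauchySeq_tendsto_of_complete (cauchySeq_of_le_geometric (1 - coneGap B)
    (Real.exp B * ∫ x, (1 : (ℕ → E) →ᵇ ℝ) x ∂ν) (sub_lt_self 1 hT.coneGap_pos) fun n => ?_)
  rw [dist_eq_norm, Function.iterate_succ_apply, mul_comm]
  exact hT.norm_iterate_sub_le n hone (hT.logHolder_iterate hone 1) (hT.integral_map 1).symm

variable {h : (ℕ → E) →ᵇ ℝ}

theorem tendsto_iterate_of_logHolder (hT : IsConeContraction T ν α B)
    (hh : Tendsto (fun n => T^[n] 1) atTop (𝓝 h)) {φ : (ℕ → E) →ᵇ ℝ} (hφ : LogHolder α B φ) :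
    Tendsto (fun n => T^[n] φ) atTop (𝓝 ((∫ x, φ x ∂ν) • h)) := by
  set I := ∫ x, φ x ∂ν
  have hrate : Tendsto (fun n => (1 - coneGap B) ^ n * (Real.exp B * I)) atTop (𝓝 0) := by
    simpa using (tendsto_pow_atTop_nhds_zero_of_lt_one (sub_nonneg.2 (coneGap_le_one hT.one_le))
      (sub_lt_self 1 hT.coneGap_pos)).mul_const (Real.exp B * I)
  have hsub : Tendsto (fun n => T^[n] φ - T^[n] (const (ℕ → E) I)) atTop (𝓝 0) :=
    squeeze_zero_norm (fun n => hT.norm_iterate_sub_le n hφ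
      (hT.logHolder_const (integral_nonneg hφ.nonneg)) (by simp [I])) hrate
  simpa only [sub_add_cancel, zero_add] using hsub.add (tendsto_iterate_const hh I)

theorem tendsto_iterate_of_holderConst (hT : IsConeContraction T ν α B)
    (hh : Tendsto (fun n => T^[n] 1) atTop (𝓝 h)) {g : (ℕ → E) →ᵇ ℝ} {D : ℝ}
    (hg : HolderConst α D g) : Tendsto (fun n => T^[n] g) atTop (𝓝 ((∫ x, g x ∂ν) • h)) := by
  obtain ⟨K, hK⟩ := hg.exists_logHolder_add_const (zero_lt_one.trans_le hT.one_le) (memCb_coe g).2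
  have hadd : Tendsto (fun n => T^[n] (g + const (ℕ → E) K)) atTop
      (𝓝 ((∫ x, (g + const (ℕ → E) K) x ∂ν) • h)) :=
    hT.tendsto_iterate_of_logHolder hh hK
  have hint : ∫ x, (g + const (ℕ → E) K) x ∂ν = (∫ x, g x ∂ν) + K := by
    simp [integral_add (g.integrable ν) (integrable_const K)]
  simpa only [hint, iterate_map_add, add_smul, add_sub_cancel_right]
    using hadd.sub (tendsto_iterate_const hh K)

theorem limit_mem_Icc (hT : IsConeContraction T ν α B)
    (hh : Tendsto (fun n => T^[n] 1) atTop (𝓝 h)) (x : ℕ → E) :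
    h x ∈ Set.Icc (Real.exp (-B)) (Real.exp B) := by
  have hlim : Tendsto (fun n => T^[n] 1 x) atTop (𝓝 (h x)) :=
    ((continuous_eval_const x).tendsto h).comp hh
  refine isClosed_Icc.mem_of_tendsto hlim (.of_forall fun n => ?_)
  have hcone := hT.logHolder_iterate (hT.logHolder_const zero_le_one) n
  have hint : ∫ x, T^[n] (const (ℕ → E) 1) x ∂ν = 1 := by simp [hT.integral_iterate]
  have hlower := hcone.exp_neg_mul_integral_le ν hT.exponent_nonneg hT.nonneg x
  have hupper := hcone.le_exp_mul_integral ν hT.exponent_nonneg hT.nonneg x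
  rw [hint, mul_one] at hlower hupper
  exact ⟨hlower, hupper⟩

theorem memHol_limit (hT : IsConeContraction T ν α B)
    (hh : Tendsto (fun n => T^[n] 1) atTop (𝓝 h)) : MemHol α h := by
  have hcone : LogHolder α B h :=
    .of_tendsto (fun n => hT.logHolder_iterate (hT.logHolder_const zero_le_one) n)
      fun x => ((continuous_eval_const x).tendsto h).comp hh
  exact ⟨h.continuous, (memCb_coe h).2, _,
    hcone.holderConst hT.exponent_nonneg hT.nonneg fun x => (hT.limit_mem_Icc hh x).2⟩

theorem eq_smul_of_isFixedPt (hT : IsConeContraction T ν α B)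
    (hh : Tendsto (fun n => T^[n] 1) atTop (𝓝 h)) {g : (ℕ → E) →ᵇ ℝ} {D : ℝ}
    (hg : HolderConst α D g) (hfix : Function.IsFixedPt T g) : g = (∫ x, g x ∂ν) • h := by
  refine tendsto_nhds_unique ?_ (hT.tendsto_iterate_of_holderConst hh hg)
  simp only [(hfix.iterate _).eq, tendsto_const_nhds]

end IsConeContraction

end ConeContraction

theorem exists_cone_exponent {θ : ℝ} (hθ₀ : 0 ≤ θ) (hθ₁ : θ < 1) (C : ℝ) :
    ∃ B : ℝ, 1 ≤ B ∧ θ * (B + C) ≤ B - 1 := by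
  have hθ : 0 < 1 - θ := sub_pos.2 hθ₁
  refine ⟨(1 + θ * |C|) / (1 - θ), ?_, ?_⟩
  · rw [le_div_iff₀ hθ]
    nlinarith [mul_nonneg hθ₀ (abs_nonneg C)]
  · have hC : θ * C ≤ θ * |C| := mul_le_mul_of_nonneg_left (le_abs_self C) hθ₀
    have hB : (1 + θ * |C|) / (1 - θ) * (1 - θ) = 1 + θ * |C| := div_mul_cancel₀ _ hθ.ne'
    linarith

section Eigenfunction

omit [BorelSpace E]

variable [OpensMeasurableSpace E] {p : Measure E} [IsFiniteMeasure p] {f : (ℕ → E) →ᵇ ℝ} {lam : ℝ}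

theorem exists_isConeContraction {α C : ℝ} (hα : 0 < α) (hf : HolderConst α C f)
    {ν : Measure (ℕ → E)} (hlam : 0 < lam)
    (hconf : ∀ φ, MemCb φ → ∫ x, ruelle p f φ x ∂ν = lam * ∫ x, φ x ∂ν) :
    ∃ B, IsConeContraction (lam⁻¹ • ruelleCLM p f) ν α B := by
  obtain ⟨B, hB, hBC⟩ := exists_cone_exponent (θ := (1 / 2) ^ α) (by positivity)
    (Real.rpow_lt_one (by norm_num) (by norm_num) hα) C
  refine ⟨B, hα.le, hB, fun φ => ?_, fun φ hφ => ?_⟩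
  · simp only [_root_.smul_apply, BoundedContinuousFunction.smul_apply, coe_ruelleCLM,
      smul_eq_mul]
    rw [integral_const_mul, hconf φ (memCb_coe φ), inv_mul_cancel_left₀ hlam.ne']
  · exact ((hφ.ruelle hf p).mono hBC).const_mul (inv_pos.2 hlam).le

theorem isFixedPt_inv_smul_ruelleCLM_iff (hlam : lam ≠ 0) {φ : (ℕ → E) →ᵇ ℝ} :
    Function.IsFixedPt (lam⁻¹ • ruelleCLM p f) φ ↔ ∀ x, ruelle p f φ x = lam * φ x := by
  rw [Function.IsFixedPt, BoundedContinuousFunction.ext_iff]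
  exact forall_congr' fun x => inv_mul_eq_iff_eq_mul₀ hlam

theorem iterate_ruelle_one_div_integral {ν : Measure (ℕ → E)} [IsProbabilityMeasure ν] {α B : ℝ}
    (hT : IsConeContraction (lam⁻¹ • ruelleCLM p f) ν α B) (hlam : lam ≠ 0) (n : ℕ) (x : ℕ → E) :
    (ruelle p f)^[n] (fun _ => 1) x / ∫ y, (ruelle p f)^[n] (fun _ => 1) y ∂ν =
      (lam⁻¹ • ruelleCLM p f)^[n] 1 x := by
  have hiter (y : ℕ → E) : (ruelle p f)^[n] (fun _ => 1) y =
      lam ^ n * (lam⁻¹ • ruelleCLM p f)^[n] 1 y :=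
    congrFun (iterate_ruelle_eq_smul p f 1 hlam n) y
  have hint : ∫ y, (ruelle p f)^[n] (fun _ => 1) y ∂ν = lam ^ n := by
    simp only [hiter]
    rw [integral_const_mul, hT.integral_iterate]
    simp
  rw [hint, hiter, mul_div_cancel_left₀ _ (pow_ne_zero n hlam)]

end Eigenfunction

theorem statement7_general {E : Type*} [MetricSpace E] [SecondCountableTopology E]
    [MeasurableSpace E] [OpensMeasurableSpace E] (p : Measure E) [IsFiniteMeasure p]
    (α : ℝ) (hα : 0 < α) (f : (ℕ → E) → ℝ) (hf : MemHol α f)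
    (ν : Measure (ℕ → E)) [IsProbabilityMeasure ν] (lam : ℝ) (hlam : 0 < lam)
    (hconf : ∀ φ : (ℕ → E) → ℝ, MemCb φ →
      (∫ x, ruelle p f φ x ∂ν) = lam * ∫ x, φ x ∂ν) :
    ∃ h : (ℕ → E) → ℝ,
      (∀ x : ℕ → E, Tendsto (fun n : ℕ =>
          (ruelle p f)^[n] (fun _ => 1) x / ∫ y, (ruelle p f)^[n] (fun _ => 1) y ∂ν)
        atTop (𝓝 (h x))) ∧
      (∃ c C : ℝ, 0 < c ∧ c ≤ C ∧ ∀ x, c ≤ h x ∧ h x ≤ C) ∧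
      MemHol α h ∧
      (∀ x, ruelle p f h x = lam * h x) ∧
      ∀ h' : (ℕ → E) → ℝ, MemHol α h' → (∀ x, ruelle p f h' x = lam * h' x) →
        ∃ c : ℝ, h' = fun x => c * h x := by
  obtain ⟨hfc, hfb, C, hfC⟩ := hf
  obtain ⟨f, rfl⟩ := MemCb.exists_boundedContinuousFunction ⟨hfc, hfb⟩
  obtain ⟨B, hT⟩ := exists_isConeContraction hα hfC hlam hconf
  obtain ⟨h, hh⟩ := hT.exists_tendsto_iterate_one
  refine ⟨h, fun x => ?_, ⟨Real.exp (-B), Real.exp B, Real.exp_pos _,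
    Real.exp_le_exp.2 (by linarith [hT.nonneg]), hT.limit_mem_Icc hh⟩, hT.memHol_limit hh, ?_, ?_⟩
  · exact (((continuous_eval_const x).tendsto h).comp hh).congr fun n =>
      (iterate_ruelle_one_div_integral hT hlam.ne' n x).symm
  · exact (isFixedPt_inv_smul_ruelleCLM_iff hlam.ne').1
      (isFixedPt_of_tendsto_iterate hh (lam⁻¹ • ruelleCLM p f).continuous.continuousAt)
  · rintro h' ⟨hc', hb', D, hD⟩ heig
    obtain ⟨g, rfl⟩ := MemCb.exists_boundedContinuousFunction ⟨hc', hb'⟩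
    exact ⟨_, congrArg DFunLike.coe
      (hT.eq_smul_of_isFixedPt hh hD ((isFixedPt_inv_smul_ruelleCLM_iff hlam.ne').2 heig))⟩

/-- Existence of the eigenfunction `h` as the limit of
`L_f^n 1 / ∫ L_f^n 1 dν`: it is bounded away from `0` and `∞`, belongs to `Hol(α)`,
satisfies `L_f h = λ h`, and is the unique Hölder eigenfunction up to a scalar. -/
theorem statement7 {E : Type*} [MetricSpace E] [CompleteSpace E]
    [TopologicalSpace.SeparableSpace E] [MeasurableSpace E] [BorelSpace E] [Nonempty E]
    (p : Measure E) [IsProbabilityMeasure p]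
    (α : ℝ) (hα0 : 0 < α) (hα1 : α < 1)
    (f : (ℕ → E) → ℝ) (hf : MemHol α f)
    (ν : Measure (ℕ → E)) (hν : IsProbabilityMeasure ν) (lam : ℝ) (hlam : 0 < lam)
    (hlam_eq : lam = ∫ x, ruelle p f (fun _ => 1) x ∂ν)
    (hconf : ∀ φ : (ℕ → E) → ℝ, MemCb φ →
      (∫ x, ruelle p f φ x ∂ν) = lam * ∫ x, φ x ∂ν) :
    ∃ h : (ℕ → E) → ℝ,
      (∀ x : ℕ → E, Tendsto (fun n : ℕ =>
          (ruelle p f)^[n] (fun _ => 1) x / ∫ y, (ruelle p f)^[n] (fun _ => 1) y ∂ν)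
        atTop (nhds (h x))) ∧
      (∃ c C : ℝ, 0 < c ∧ c ≤ C ∧ ∀ x, c ≤ h x ∧ h x ≤ C) ∧
      MemHol α h ∧
      (∀ x, ruelle p f h x = lam * h x) ∧
      ∀ h' : (ℕ → E) → ℝ, MemHol α h' → (∀ x, ruelle p f h' x = lam * h' x) →
        ∃ c : ℝ, h' = fun x => c * h x := by
  have : SecondCountableTopology E := UniformSpace.secondCountable_of_separable E
  exact statement7_general p α hα0 f hf ν lam hlam hconf

end
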